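/- Under the hypotheses of the equidistribution lemma — K a compact metric space, F : K → K continuous, d ≥ 2, R_n the (finite) sets of repelling periodic points of period dividing n with limsup Card(R_n)/dⁿ ≤ 1, ν an F-invariant, mixing, constant-Jacobian-d Borel probability measure, L an F-invariant Borel set of full ν-measure on which F is a degree-d covering, and ν̂ an F̂-invariant mixing probability on the space of histories L̂ projecting to ν under every coordinate projection, such that properties (P1) (existence on each ball B(x₀, η(x̂)) of inverse branches G_{x̂,n} of Fⁿ sending x₀ to x_{-n} with Lipschitz constant at most l(x̂)e^{-nΛ}) and (P2) (eventual pairwise disjointness of the sets G_{x̂,n}(C) over histories x̂ with zeroth coordinate x₀ and η(x̂) > 1/N, for any closed C ⊆ B(x₀, 1/N)) hold — define, for N ∈ ℕ, L̂_N := { x̂ ∈ L̂ : η(x̂) > 1/N and l(x̂) ≤ N } and ν_N := (π₀)_*(1_{L̂_N} ν̂). Then for every â ∈ L̂_N with zeroth coordinate a₀ and every closed set C ⊆ B(a₀, 1/(2N)), every weak-* limit σ̃ of the sequence of measures σ_n := d^{-n} Σ_{p ∈ R_n} δ_p satisfies σ̃(C) ≥ ν_N(C). -/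

import Mathlib

open MeasureTheory Filter Metric Set Topology
open scoped NNReal ENNReal

/-- A repelling periodic point of `F` of period dividing `n`: `F^[n] x = x` and there is a
strictly contracting inverse branch `H` of `F^[n]` on a ball around `x` fixing `x`. -/
def IsRepellingPeriodicPt {K : Type*} [MetricSpace K] (F : K → K) (n : ℕ) (x : K) : Prop :=
  F^[n] x = x ∧
    ∃ r : ℝ, 0 < r ∧ ∃ c : ℝ≥0, c < 1 ∧ ∃ H : K → K,
      (∀ y ∈ ball x r, F^[n] (H y) = y) ∧ H x = x ∧ LipschitzOnWith c H (ball x r)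

/-- The space of histories of `F : L → L`: sequences `x̂ = (x₀, x₋₁, x₋₂, …)` of points of
`L` (with `x̂ j = x₋ⱼ`) such that `F x₋ⱼ₋₁ = x₋ⱼ` for all `j`. -/
def histories {K : Type*} (F : K → K) (L : Set K) : Set (ℕ → K) :=
  {x | (∀ j, x j ∈ L) ∧ ∀ j, F (x (j + 1)) = x j}

/-- The shift map `F̂ (x₀, x₋₁, …) := (F x₀, x₀, x₋₁, …)` on histories. -/
def histShift {K : Type*} (F : K → K) (x : ℕ → K) : ℕ → K :=
  fun j => match j with
  | 0 => F (x 0)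
  | j + 1 => x j

/-! Mixing on the space of histories shows that `ν̂ (L̂_N ∩ π₀⁻¹ C) * ν C` is the limit of the
masses of `L̂_N ∩ π₀⁻¹ C ∩ πₙ⁻¹ C`. Since `ν` has constant Jacobian, such a mass is at most the
integral over `x ∈ C` of `d⁻ⁿ` times the number of points `x₋ₙ ∈ C` of histories in `L̂_N` starting
at `x₀ = x`. For `n` large the inverse branch `G x̂ n` attached to each such point contracts a
closed thickening `T` of `C` into itself, hence fixes a point of `T`, which is a repelling periodic
point; the disjointness (P2) makes distinct points `x₋ₙ` yield distinct fixed points. So the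
integrand is asymptotically at most `σ̃ T`. Cancel `ν C` and let `T` shrink to `C`. -/

section FibreCard

variable {X : Type*}

lemma encard_inter_iterate_preimage_le {F : X → X} {L : Set X} (hL : MapsTo F L L) {d : ℕ}
    (hd : ∀ y, (L ∩ F ⁻¹' {y}).encard ≤ d) (n : ℕ) (y : X) :
    (L ∩ F^[n] ⁻¹' {y}).encard ≤ (d ^ n : ℕ) := by
  induction n with
  | zero => simpa using encard_le_encard (inter_subset_right : L ∩ {y} ⊆ {y})
  | succ n ih =>
    have hfin : (L ∩ F^[n] ⁻¹' {y}).Finite := finite_of_encard_le_coe ih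
    have hcover : L ∩ F^[n + 1] ⁻¹' {y} ⊆ ⋃ z ∈ hfin.toFinset, L ∩ F ⁻¹' {z} := fun x hx =>
      mem_biUnion (hfin.mem_toFinset.2 ⟨hL hx.1, hx.2⟩) ⟨hx.1, rfl⟩
    calc (L ∩ F^[n + 1] ⁻¹' {y}).encard
        ≤ ∑ z ∈ hfin.toFinset, (L ∩ F ⁻¹' {z}).encard :=
          (encard_le_encard hcover).trans (Finset.set_encard_biUnion_le _ _)
      _ ≤ hfin.toFinset.card • (d : ℕ∞) := Finset.sum_le_card_nsmul _ _ _ fun z _ => hd z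
      _ = (L ∩ F^[n] ⁻¹' {y}).encard * d := by
          rw [nsmul_eq_mul, hfin.encard_eq_coe_toFinset_card]
      _ ≤ (d ^ n : ℕ) * d := by gcongr
      _ = (d ^ (n + 1) : ℕ) := by rw [pow_succ, Nat.cast_mul]

end FibreCard

section InjectivePieces

variable {X Y : Type*} [MetricSpace X] [MeasurableSpace X] [OpensMeasurableSpace X]
  [TopologicalSpace Y] [T2Space Y] {f : X → Y} {A : Set X}

lemma measurableSet_setOf_eq_of_apply_eq (hf : Continuous f) (hA : IsCompact A) :
    MeasurableSet {x ∈ A | ∀ y ∈ A, f y = f x → y = x} := by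
  let Z (m : ℕ) : Set (X × X) :=
    A ×ˢ A ∩ ({q | f q.2 = f q.1} ∩ {q | 1 / ((m : ℝ) + 1) ≤ dist q.2 q.1})
  have hZ (m : ℕ) : IsCompact (Z m) := (hA.prod hA).inter_right <|
    (isClosed_eq (hf.comp continuous_snd) (hf.comp continuous_fst)).inter
      (isClosed_le continuous_const (continuous_snd.dist continuous_fst))
  have heq : {x ∈ A | ∀ y ∈ A, f y = f x → y = x} = A \ ⋃ m, Prod.fst '' Z m := by
    ext x
    refine ⟨fun hx => ⟨hx.1, fun hmem => ?_⟩, fun hx => ⟨hx.1, fun y hy hyx => ?_⟩⟩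
    · obtain ⟨m, ⟨x, y⟩, ⟨⟨-, hy⟩, hyx, hdist⟩, rfl⟩ := mem_iUnion.1 hmem
      have hpos : 0 < dist y x := Nat.one_div_pos_of_nat.trans_le hdist
      exact dist_pos.1 hpos (hx.2 y hy hyx)
    · by_contra hne
      obtain ⟨m, hm⟩ := exists_nat_one_div_lt (dist_pos.2 hne)
      exact hx.2 (mem_iUnion.2 ⟨m, (x, y), ⟨⟨hx.1, hy⟩, hyx, hm.le⟩, rfl⟩)
  rw [heq]
  exact hA.measurableSet.diff (.iUnion fun m => ((hZ m).image continuous_fst).measurableSet)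

lemma exists_measurable_injOn_partition [SecondCountableTopology X] (hf : Continuous f)
    (hA : IsCompact A) (hfin : ∀ y, (A ∩ f ⁻¹' {y}).Finite) :
    ∃ E : ℕ → Set X, (∀ i, MeasurableSet (E i)) ∧ Pairwise (Function.onFun Disjoint E) ∧
      ⋃ i, E i = A ∧ ∀ i, InjOn f (E i) := by
  obtain ⟨b, hb⟩ := countable_iff_exists_subset_range.1
    (TopologicalSpace.countable_countableBasis X)
  let W (i : ℕ) : Set X := A ∩ closure (b i)
  let D (i : ℕ) : Set X := {x ∈ W i | ∀ y ∈ W i, f y = f x → y = x}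
  have hDA : ⋃ i, D i = A := by
    refine (iUnion_subset fun i x hx => hx.1.1).antisymm fun x hx => mem_iUnion.2 ?_
    have hisol : ((A ∩ f ⁻¹' {f x}) \ {x})ᶜ ∈ 𝓝 x :=
      ((hfin (f x)).sdiff.isClosed).isOpen_compl.mem_nhds (by simp)
    obtain ⟨U, hU, hxU, hUsub⟩ :=
      (TopologicalSpace.isBasis_countableBasis X).exists_closure_subset hisol
    obtain ⟨i, rfl⟩ := hb hU
    refine ⟨i, ⟨hx, subset_closure hxU⟩, fun y hy hyx => ?_⟩
    by_contra hne
    exact hUsub hy.2 ⟨⟨hy.1, hyx⟩, hne⟩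
  have hDinj (i : ℕ) : InjOn f (D i) := fun x hx y hy hxy => hy.2 x hx.1 hxy
  exact ⟨disjointed D,
    .disjointed fun i =>
      measurableSet_setOf_eq_of_apply_eq hf (hA.inter_right isClosed_closure),
    disjoint_disjointed D, iUnion_disjointed.trans hDA,
    fun i => (hDinj i).mono (disjointed_subset D i)⟩

end InjectivePieces

/-- The measure `ν` has constant Jacobian `c` for `f`: it multiplies by `c` on sets where `f` is
injective. Measurability of `f` is not part of the definition, so that of `f '' A` is assumed. -/
def HasConstantJacobian {X : Type*} [MeasurableSpace X] (f : X → X) (c : ℝ≥0∞)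
    (ν : Measure X) : Prop :=
  ∀ A : Set X, MeasurableSet A → InjOn f A → MeasurableSet (f '' A) → c * ν A = ν (f '' A)

namespace HasConstantJacobian

lemma iterate {X : Type*} [MeasurableSpace X] [StandardBorelSpace X] {ν : Measure X} {f : X → X}
    {c : ℝ≥0∞} (h : HasConstantJacobian f c ν) (hf : Measurable f) (n : ℕ) :
    HasConstantJacobian f^[n] (c ^ n) ν := by
  induction n with
  | zero => intro A _ _ _; simp
  | succ n ih =>
    intro A hA hinj himage
    rw [Function.iterate_succ] at hinj himage ⊢
    have hinj₁ : InjOn f A := hinj.of_comp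
    have hA₁ : MeasurableSet (f '' A) := hA.image_of_measurable_injOn hf hinj₁
    rw [image_comp] at himage ⊢
    rw [pow_succ, mul_assoc, h A hA hinj₁ hA₁, ih _ hA₁ hinj.image_of_comp himage]

variable {X : Type*} [MetricSpace X] [CompleteSpace X] [SecondCountableTopology X]
  [MeasurableSpace X] [BorelSpace X] {ν : Measure X} {f : X → X} {c : ℝ≥0∞}

lemma lintegral_encard_fibre (h : HasConstantJacobian f c ν) (hf : Continuous f) {A : Set X}
    (hA : IsCompact A) (hfin : ∀ y, (A ∩ f ⁻¹' {y}).Finite) :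
    ∫⁻ y, (A ∩ f ⁻¹' {y}).encard ∂ν = c * ν A := by
  obtain ⟨E, hE, hdisj, hEA, hinj⟩ := exists_measurable_injOn_partition hf hA hfin
  have himage (i : ℕ) : MeasurableSet (f '' E i) :=
    (hE i).image_of_measurable_injOn hf.measurable (hinj i)
  have hfib (i : ℕ) (y : X) : MeasurableSet (E i ∩ f ⁻¹' {y}) :=
    (hE i).inter (hf.measurable (measurableSet_singleton y))
  have hpiece (i : ℕ) (y : X) :
      Measure.count (E i ∩ f ⁻¹' {y}) = (f '' E i).indicator 1 y := by
    by_cases hy : y ∈ f '' E i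
    · obtain ⟨x, hx, rfl⟩ := hy
      have : E i ∩ f ⁻¹' {f x} = {x} :=
        Subset.antisymm (fun z hz => hinj i hz.1 hx hz.2) (by simpa using hx)
      simp [this, mem_image_of_mem f hx]
    · have : E i ∩ f ⁻¹' {y} = ∅ := eq_empty_of_forall_notMem fun x hx => hy ⟨x, hx⟩
      simp [this, hy]
  have hsum (y : X) : ((A ∩ f ⁻¹' {y}).encard : ℝ≥0∞) = ∑' i, (f '' E i).indicator 1 y := by
    have hdisj' : Pairwise (Function.onFun Disjoint fun i => E i ∩ f ⁻¹' {y}) := fun i j hij =>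
      (hdisj hij).mono inter_subset_left inter_subset_left
    simp_rw [← hpiece]
    rw [← measure_iUnion hdisj' (hfib · y), ← iUnion_inter, hEA, Measure.count_apply
      (hA.measurableSet.inter (hf.measurable (measurableSet_singleton y)))]
  calc ∫⁻ y, (A ∩ f ⁻¹' {y}).encard ∂ν
      = ∑' i, ν (f '' E i) := by
        simp_rw [hsum]
        rw [lintegral_tsum fun i => (measurable_one.indicator (himage i)).aemeasurable]
        simp_rw [lintegral_indicator_one (himage _)]
    _ = ∑' i, c * ν (E i) := tsum_congr fun i => (h _ (hE i) (hinj i) (himage i)).symm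
    _ = c * ν A := by rw [ENNReal.tsum_mul_left, ← measure_iUnion hdisj hE, hEA]

lemma mul_measure_le_lintegral_encard_fibre {Ω : Type*} [TopologicalSpace Ω] [PolishSpace Ω]
    [MeasurableSpace Ω] [BorelSpace Ω] {μ : Measure Ω} [IsFiniteMeasure μ] {π : Ω → X}
    (h : HasConstantJacobian f c (μ.map π)) (hf : Continuous f) (hπ : Continuous π)
    {E : Set Ω} (hE : MeasurableSet E) (hfin : ∀ y, (π '' E ∩ f ⁻¹' {y}).Finite) :
    c * μ E ≤ ∫⁻ y, (π '' E ∩ f ⁻¹' {y}).encard ∂(μ.map π) := by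
  rw [hE.measure_eq_iSup_isCompact, ENNReal.mul_iSup]
  refine iSup_le fun Q => ?_
  simp_rw [ENNReal.mul_iSup]
  refine iSup₂_le fun hQE hQ => ?_
  have hsub : π '' Q ⊆ π '' E := image_mono hQE
  calc c * μ Q ≤ c * μ.map π (π '' Q) := by
        rw [Measure.map_apply hπ.measurable (hQ.image hπ).measurableSet]
        gcongr
        exact subset_preimage_image π Q
    _ = ∫⁻ y, (π '' Q ∩ f ⁻¹' {y}).encard ∂(μ.map π) :=
        (h.lintegral_encard_fibre hf (hQ.image hπ) fun y =>
          (hfin y).subset (inter_subset_inter_left _ hsub)).symm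
    _ ≤ ∫⁻ y, (π '' E ∩ f ⁻¹' {y}).encard ∂(μ.map π) := by
        gcongr

end HasConstantJacobian

section Limits

lemma limsup_lintegral_le_lintegral_limsup {X : Type*} [MeasurableSpace X] {μ : Measure X}
    {f : ℕ → X → ℝ≥0∞} {g : X → ℝ≥0∞} (hfg : ∀ n, f n ≤ g) (hg : ∫⁻ x, g x ∂μ ≠ ∞) :
    limsup (fun n => ∫⁻ x, f n x ∂μ) atTop ≤ ∫⁻ x, limsup (f · x) atTop ∂μ := by
  -- `∫⁻` is a lower integral, so each `f n` has a measurable minorant with the same integral.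
  choose u hu huf hint using fun n => exists_measurable_le_lintegral_eq μ (f n)
  simp_rw [hint]
  refine (limsup_lintegral_le g hu (fun n => ae_of_all _ ((huf n).trans (hfg n))) hg).trans ?_
  exact lintegral_mono fun x => limsup_le_limsup (.of_forall fun n => huf n x)

lemma limsup_encard_inter_div_le {X ι : Type*} [TopologicalSpace X] [HasOuterApproxClosed X]
    [MeasurableSpace X] [BorelSpace X] {R : ι → Finset X} {w : ι → ℝ≥0} (hw : ∀ i, w i ≠ 0)
    {l : Filter ι} {σ : Measure X} [IsFiniteMeasure σ]
    (hlim : ∀ f : BoundedContinuousFunction X ℝ,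
      Tendsto (fun i => (∑ p ∈ R i, f p) / w i) l (𝓝 (∫ x, f x ∂σ)))
    {T : Set X} (hT : IsClosed T) :
    limsup (fun i => ((R i ∩ T : Set X).encard / w i : ℝ≥0∞)) l ≤ σ T := by
  classical
  let μ (i : ι) : FiniteMeasure X := ⟨(w i)⁻¹ • ∑ p ∈ R i, Measure.dirac p, inferInstance⟩
  have hμT (i : ι) : (μ i : Measure X) T = (R i ∩ T : Set X).encard / w i := by
    have hfilter : (R i ∩ T : Set X) = ((R i).filter (· ∈ T) : Finset X) := by ext; simp
    simp only [μ, FiniteMeasure.toMeasure_mk, Measure.smul_apply, Measure.finsetSum_apply,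
      Measure.dirac_apply' _ hT.measurableSet, indicator_apply, Pi.one_apply, Finset.sum_boole,
      hfilter, encard_coe_eq_coe_finsetCard, ENat.toENNReal_coe, ENNReal.smul_def,
      ENNReal.coe_inv (hw i), smul_eq_mul, ENNReal.div_eq_inv_mul]
  have hμ : Tendsto μ l (𝓝 (⟨σ, inferInstance⟩ : FiniteMeasure X)) := by
    refine FiniteMeasure.tendsto_iff_forall_integral_tendsto.2 fun f => (hlim f).congr fun i => ?_
    have hint (p : X) : ∫ x, f x ∂Measure.dirac p = f p :=
      integral_dirac' _ _ f.continuous.stronglyMeasurable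
    simp only [μ, FiniteMeasure.toMeasure_mk, integral_smul_nnreal_measure]
    rw [integral_finsetSum_measure fun p _ => f.integrable _]
    simp [hint, NNReal.smul_def, div_eq_inv_mul]
  simp_rw [← hμT]
  exact FiniteMeasure.limsup_measure_closed_le_of_tendsto hμ hT

end Limits

/-- The transformation `T` is mixing for the measure `μ`. Invariance of `μ` and measurability of
`T` are not part of the definition. -/
def IsMixing {Ω : Type*} [MeasurableSpace Ω] (T : Ω → Ω) (μ : Measure Ω) : Prop :=
  ∀ A B : Set Ω, MeasurableSet A → MeasurableSet B →
    Tendsto (fun n => μ (A ∩ T^[n] ⁻¹' B)) atTop (𝓝 (μ A * μ B))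

section Histories

variable {X : Type*} {F : X → X} {L : Set X}

lemma iterate_apply_of_mem_histories {x : ℕ → X} (hx : x ∈ histories F L) (n : ℕ) :
    F^[n] (x n) = x 0 := by
  induction n with
  | zero => rfl
  | succ n ih => rw [Function.iterate_succ_apply, hx.2 n, ih]

/-- The points `x₋ₙ` of the histories `x ∈ S` that lie in `C` both at time `0` and at time `-n`. -/
def returnPoints (S : Set (ℕ → X)) (C : Set X) (n : ℕ) : Set X :=
  (· n) '' (S ∩ (· 0) ⁻¹' C ∩ (· n) ⁻¹' C)

lemma exists_of_mem_returnPoints {S : Set (ℕ → X)} (hS : S ⊆ histories F L) {C : Set X} {n : ℕ}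
    {y : X} (hy : y ∈ returnPoints S C n) :
    ∃ x ∈ S, x 0 = F^[n] y ∧ x n = y ∧ x 0 ∈ C ∧ y ∈ C := by
  obtain ⟨x, ⟨⟨hxS, hx0⟩, hxn⟩, rfl⟩ := hy
  exact ⟨x, hxS, (iterate_apply_of_mem_histories (hS hxS) n).symm, rfl, hx0, hxn⟩

lemma iterate_histShift_apply_self (F : X → X) (n : ℕ) (x : ℕ → X) :
    (histShift F)^[n] x n = x 0 := by
  induction n with
  | zero => rfl
  | succ n ih => rw [Function.iterate_succ_apply']; exact ih

lemma measurable_histShift [MeasurableSpace X] (hF : Measurable F) : Measurable (histShift F) :=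
  measurable_pi_lambda _ fun
    | 0 => hF.comp (measurable_pi_apply 0)
    | j + 1 => measurable_pi_apply j

lemma measurableSet_histories [MeasurableSpace X] [MeasurableEq X] (hF : Measurable F)
    (hL : MeasurableSet L) : MeasurableSet (histories F L) := by
  have hcoord (j : ℕ) : MeasurableSet {x : ℕ → X | x j ∈ L} := measurable_pi_apply j hL
  have horbit (j : ℕ) : MeasurableSet {x : ℕ → X | F (x (j + 1)) = x j} :=
    measurableSet_eq_fun (hF.comp (measurable_pi_apply (j + 1))) (measurable_pi_apply j)
  simpa only [histories, ofPred_and, ofPred_forall] using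
    (MeasurableSet.iInter hcoord).inter (MeasurableSet.iInter horbit)

lemma IsMixing.tendsto_measure_inter_coord_preimage [MeasurableSpace X] {μ : Measure (ℕ → X)}
    (hmix : IsMixing (histShift F) μ) (hμ : MeasurePreserving (histShift F) μ μ)
    {A : Set (ℕ → X)} (hA : MeasurableSet A) {C : Set X} (hC : MeasurableSet C) :
    Tendsto (fun n => μ (A ∩ (· n) ⁻¹' C)) atTop (𝓝 (μ A * μ ((· 0) ⁻¹' C))) := by
  have hcoord (j : ℕ) : MeasurableSet ((· j) ⁻¹' C : Set (ℕ → X)) := measurable_pi_apply j hC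
  have hlim := hmix _ A (hcoord 0) hA
  rw [mul_comm]
  refine hlim.congr fun n => ?_
  rw [← (hμ.iterate n).measure_preimage (hA.inter (hcoord n)).nullMeasurableSet, inter_comm,
    preimage_inter]
  congr! 2
  ext x
  simp only [mem_preimage, iterate_histShift_apply_self]

end Histories

section InverseBranches

variable {X : Type*} [MetricSpace X] {F : X → X}

lemma exists_isRepellingPeriodicPt_of_mapsTo [CompleteSpace X] {n : ℕ} {H : X → X} {T U : Set X}
    {c : ℝ≥0} (hT : IsClosed T) (hTne : T.Nonempty) (hU : IsOpen U) (hTU : T ⊆ U)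
    (hinv : ∀ y ∈ U, F^[n] (H y) = y) (hmaps : MapsTo H T T) (hc : c < 1)
    (hlip : LipschitzOnWith c H U) :
    ∃ p ∈ T, H p = p ∧ IsRepellingPeriodicPt F n p := by
  obtain ⟨x, hx⟩ := hTne
  have hcontr : ContractingWith c (hmaps.restrict H T T) :=
    ⟨hc, (hlip.mono hTU).mapsToRestrict hmaps⟩
  obtain ⟨p, hp, hfix : H p = p, -⟩ :=
    hcontr.exists_fixedPoint' hT.isComplete hmaps hx (edist_ne_top _ _)
  obtain ⟨r, hr, hball⟩ := Metric.isOpen_iff.1 hU p (hTU hp)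
  exact ⟨p, hp, hfix, by simpa only [hfix] using hinv p (hTU hp),
    r, hr, c, hc, H, fun y hy => hinv y (hball hy), hfix, hlip.mono hball⟩

lemma encard_le_encard_isRepellingPeriodicPt [CompleteSpace X] {n : ℕ} {B T U : Set X} {x : X}
    {H : X → X → X} {c : ℝ≥0} (hT : IsClosed T) (hxT : x ∈ T) (hU : IsOpen U) (hTU : T ⊆ U)
    (hinv : ∀ y ∈ B, ∀ z ∈ U, F^[n] (H y z) = z) (hbase : ∀ y ∈ B, H y x = y)
    (hmaps : ∀ y ∈ B, MapsTo (H y) T T) (hc : c < 1) (hlip : ∀ y ∈ B, LipschitzOnWith c (H y) U)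
    (hdisj : ∀ y ∈ B, ∀ z ∈ B, H y '' T = H z '' T ∨ Disjoint (H y '' T) (H z '' T)) :
    B.encard ≤ {p ∈ T | IsRepellingPeriodicPt F n p}.encard := by
  have hfix (y : X) (hy : y ∈ B) : ∃ p ∈ T, H y p = p ∧ IsRepellingPeriodicPt F n p :=
    exists_isRepellingPeriodicPt_of_mapsTo hT ⟨x, hxT⟩ hU hTU (hinv y hy) (hmaps y hy) hc
      (hlip y hy)
  choose! p hpT hpfix hprep using hfix
  refine encard_le_encard_of_injOn (f := p) (fun y hy => ⟨hpT y hy, hprep y hy⟩) ?_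
  intro y hy z hz hyz
  have himage : H y '' T = H z '' T := (hdisj y hy z hz).resolve_right <|
    not_disjoint_iff.2 ⟨p y, ⟨p y, hpT y hy, hpfix y hy⟩, p z, hpT z hz, by rw [hpfix z hz, hyz]⟩
  obtain ⟨t, ht, hty⟩ : y ∈ H z '' T := himage ▸ ⟨x, hxT, hbase y hy⟩
  have htx : t = x := by
    rw [← hinv z hz t (hTU ht), hty, ← hbase y hy, hinv y hy x (hTU hxT)]
  rw [← hty, htx, hbase z hz]

/-- Properties (P1) and (P2) on a block `S` of histories on which `η > r` and `l` is bounded: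
the radius `r` and the Lipschitz constants `κ n` of the inverse branches `G x n` do not depend on
the history `x ∈ S`. -/
structure HasUniformInverseBranches (F : X → X) (S : Set (ℕ → X)) (G : (ℕ → X) → ℕ → X → X)
    (r : ℝ) (κ : ℕ → ℝ≥0) : Prop where
  iterate_apply : ∀ x ∈ S, ∀ n, ∀ y ∈ ball (x 0) r, F^[n] (G x n y) = y
  apply_base : ∀ x ∈ S, ∀ n, G x n (x 0) = x n
  lipschitzOnWith : ∀ x ∈ S, ∀ n, LipschitzOnWith (κ n) (G x n) (ball (x 0) r)
  eventually_eq_or_disjoint : ∀ x₀ T, IsClosed T → T ⊆ ball x₀ r → ∀ᶠ n in atTop,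
    ∀ x ∈ S, ∀ y ∈ S, x 0 = x₀ → y 0 = x₀ →
      G x n '' T = G y n '' T ∨ Disjoint (G x n '' T) (G y n '' T)

lemma HasUniformInverseBranches.eventually_encard_returnPoints_inter_le [CompleteSpace X]
    {L : Set X} {S : Set (ℕ → X)} {G : (ℕ → X) → ℕ → X → X} {r : ℝ} {κ : ℕ → ℝ≥0}
    (hG : HasUniformInverseBranches F S G r κ) (hS : S ⊆ histories F L)
    (hκ : Tendsto κ atTop (𝓝 0)) {C : Set X} {δ : ℝ} (hδ : 0 < δ) {x₀ : X} (hx₀ : x₀ ∈ C)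
    (hCr : cthickening δ C ⊆ ball x₀ r) :
    ∀ᶠ n in atTop, (returnPoints S C n ∩ F^[n] ⁻¹' {x₀}).encard ≤
      {p ∈ cthickening δ C | IsRepellingPeriodicPt F n p}.encard := by
  have hx₀T : x₀ ∈ cthickening δ C := self_subset_cthickening C hx₀
  have hκr : Tendsto (fun n => κ n * r) atTop (𝓝 0) := by
    simpa using (NNReal.tendsto_coe.2 hκ).mul_const r
  filter_upwards [hG.eventually_eq_or_disjoint x₀ _ isClosed_cthickening hCr,
    hκ.eventually_lt_const one_pos, hκr.eventually_lt_const hδ] with n hdisj hκ1 hκδ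
  have hhist (y : X) (hy : y ∈ returnPoints S C n ∩ F^[n] ⁻¹' {x₀}) :
      ∃ x ∈ S, x 0 = x₀ ∧ x n = y := by
    obtain ⟨x, hxS, hx0, hxn, -⟩ := exists_of_mem_returnPoints hS hy.1
    exact ⟨x, hxS, hx0.trans hy.2, hxn⟩
  choose! x hxS hx0 hxn using hhist
  have hbase (y) (hy : y ∈ returnPoints S C n ∩ F^[n] ⁻¹' {x₀}) : G (x y) n x₀ = y := by
    rw [← hx0 y hy, hG.apply_base _ (hxS y hy), hxn y hy]
  have hlip (y) (hy : y ∈ returnPoints S C n ∩ F^[n] ⁻¹' {x₀}) :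
      LipschitzOnWith (κ n) (G (x y) n) (ball x₀ r) :=
    hx0 y hy ▸ hG.lipschitzOnWith _ (hxS y hy) n
  refine encard_le_encard_isRepellingPeriodicPt (H := fun y => G (x y) n) isClosed_cthickening
    hx₀T isOpen_ball hCr
    (fun y hy => hx0 y hy ▸ hG.iterate_apply _ (hxS y hy) n) hbase (fun y hy z hz => ?_) hκ1 hlip
    (fun y hy z hz => hdisj _ (hxS y hy) _ (hxS z hz) (hx0 y hy) (hx0 z hz))
  obtain ⟨-, -, -, -, -, hyC⟩ := exists_of_mem_returnPoints hS hy.1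
  refine mem_cthickening_of_dist_le _ y _ _ hyC ?_
  calc dist (G (x y) n z) y = dist (G (x y) n z) (G (x y) n x₀) := by rw [hbase y hy]
    _ ≤ κ n * dist z x₀ := (hlip y hy).dist_le_mul z (hCr hz) x₀ (hCr hx₀T)
    _ ≤ κ n * r := by gcongr; exact (mem_ball.1 (hCr hz)).le
    _ ≤ δ := hκδ.le

end InverseBranches

section ReturnDensity

variable {X : Type*} {F : X → X} {L C : Set X} {S : Set (ℕ → X)} {d n : ℕ}

/-- The number of points of the fibre of `F^[n]` over `x` lying in `returnPoints S C n`, relative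
to the cardinality `d ^ n` of the whole fibre. -/
noncomputable def returnDensity (F : X → X) (d : ℕ) (S : Set (ℕ → X)) (C : Set X) (n : ℕ) (x : X) :
    ℝ≥0∞ :=
  (returnPoints S C n ∩ F^[n] ⁻¹' {x}).encard / d ^ n

lemma encard_returnPoints_inter_le (hS : S ⊆ histories F L) (hL : MapsTo F L L)
    (hd : ∀ y, (L ∩ F ⁻¹' {y}).encard ≤ d) (n : ℕ) (x : X) :
    (returnPoints S C n ∩ F^[n] ⁻¹' {x}).encard ≤ (d ^ n : ℕ) := by
  have hsub : returnPoints S C n ⊆ L := by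
    rintro _ ⟨y, ⟨⟨hyS, -⟩, -⟩, rfl⟩
    exact (hS hyS).1 n
  exact (encard_le_encard (inter_subset_inter_left _ hsub)).trans
    (encard_inter_iterate_preimage_le hL hd n x)

lemma returnDensity_eq_zero (hS : S ⊆ histories F L) {x : X} (hx : x ∉ C) :
    returnDensity F d S C n x = 0 := by
  have hempty : returnPoints S C n ∩ F^[n] ⁻¹' {x} = ∅ := by
    refine eq_empty_of_forall_notMem fun y hy => hx ?_
    obtain ⟨z, -, hz0, -, hzC, -⟩ := exists_of_mem_returnPoints hS hy.1
    rwa [← hy.2, ← hz0]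
  simp [returnDensity, hempty]

lemma returnDensity_le_indicator (hS : S ⊆ histories F L) (hL : MapsTo F L L)
    (hd : ∀ y, (L ∩ F ⁻¹' {y}).encard ≤ d) (n : ℕ) :
    returnDensity F d S C n ≤ C.indicator 1 := by
  intro x
  by_cases hx : x ∈ C
  · rw [indicator_of_mem hx, Pi.one_apply, returnDensity]
    refine ENNReal.div_le_of_le_mul ?_
    rw [one_mul]
    exact_mod_cast ENat.toENNReal_le.2 (encard_returnPoints_inter_le hS hL hd n x)
  · simp [returnDensity_eq_zero hS hx]

lemma measure_le_lintegral_returnDensity [MetricSpace X] [CompleteSpace X]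
    [SecondCountableTopology X] [MeasurableSpace X] [BorelSpace X] {μ : Measure (ℕ → X)}
    [IsFiniteMeasure μ] (hF : Continuous F)
    (hjac : HasConstantJacobian F d (μ.map (· n))) (hd0 : d ≠ 0) (hL : MapsTo F L L)
    (hd : ∀ y, (L ∩ F ⁻¹' {y}).encard ≤ d) (hS : S ⊆ histories F L) (hSm : MeasurableSet S)
    (hC : MeasurableSet C) :
    μ (S ∩ (· 0) ⁻¹' C ∩ (· n) ⁻¹' C) ≤ ∫⁻ x, returnDensity F d S C n x ∂μ.map (· n) := by
  have hdn : (d : ℝ≥0∞) ^ n ≠ 0 := pow_ne_zero _ (Nat.cast_ne_zero.2 hd0)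
  have hdn' : (d : ℝ≥0∞) ^ n ≠ ∞ := ENNReal.pow_ne_top (ENNReal.natCast_ne_top d)
  have hE : MeasurableSet (S ∩ (· 0) ⁻¹' C ∩ (· n) ⁻¹' C) :=
    (hSm.inter (measurable_pi_apply 0 hC)).inter (measurable_pi_apply n hC)
  simp_rw [returnDensity, div_eq_mul_inv]
  rw [lintegral_mul_const' _ _ (ENNReal.inv_ne_top.2 hdn), ← div_eq_mul_inv,
    ENNReal.le_div_iff_mul_le (.inl hdn) (.inl hdn'), mul_comm]
  exact (hjac.iterate hF.measurable n).mul_measure_le_lintegral_encard_fibre (hF.iterate n)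
    (continuous_apply n) hE fun x =>
      finite_of_encard_le_coe (encard_returnPoints_inter_le hS hL hd n x)

end ReturnDensity

section HistoryBlock

variable {X : Type*} {F : X → X} {L : Set X} {η lip : (ℕ → X) → ℝ} {r M Λ : ℝ}

lemma encard_inter_preimage_singleton_le (hL : MapsTo F L L) {d : ℕ} (hd0 : d ≠ 0)
    (hd : ∀ y ∈ L, {x ∈ L | F x = y}.ncard = d) (y : X) : (L ∩ F ⁻¹' {y}).encard ≤ d := by
  by_cases hy : y ∈ L
  · have hcard : (L ∩ F ⁻¹' {y}).ncard = d := hd y hy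
    rw [← hcard, (finite_of_ncard_ne_zero (hcard.trans_ne hd0)).cast_ncard_eq]
  · have hempty : L ∩ F ⁻¹' {y} = ∅ :=
      eq_empty_of_forall_notMem fun x ⟨hxL, hxy⟩ => hy (hxy ▸ hL hxL)
    simp [hempty]

/-- The block of histories on which the inverse branches have radius more than `r` and Lipschitz
factor at most `M`; the set `L̂_N` is the case `r = 1 / N`, `M = N`. -/
def historyBlock (F : X → X) (L : Set X) (η lip : (ℕ → X) → ℝ) (r M : ℝ) : Set (ℕ → X) :=
  {x ∈ histories F L | r < η x ∧ lip x ≤ M}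

lemma measurableSet_historyBlock [MeasurableSpace X] [MeasurableEq X] (hF : Measurable F)
    (hL : MeasurableSet L) (hη : Measurable η) (hlip : Measurable lip) :
    MeasurableSet (historyBlock F L η lip r M) :=
  (measurableSet_histories hF hL).inter <|
    (measurableSet_lt measurable_const hη).inter (measurableSet_le hlip measurable_const)

lemma hasUniformInverseBranches_historyBlock [MetricSpace X] {G : (ℕ → X) → ℕ → X → X}
    (hinv : ∀ x ∈ histories F L, ∀ n, ∀ y ∈ ball (x 0) (η x), F^[n] (G x n y) = y)
    (hbase : ∀ x ∈ histories F L, ∀ n, G x n (x 0) = x n)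
    (hlip : ∀ x ∈ histories F L, ∀ n : ℕ, ∀ y ∈ ball (x 0) (η x), ∀ z ∈ ball (x 0) (η x),
      dist (G x n y) (G x n z) ≤ lip x * Real.exp (-n * Λ) * dist y z)
    (hdisj : ∀ x₀ ∈ L, ∀ T, IsClosed T → T ⊆ ball x₀ r → ∃ n₀ : ℕ, ∀ n, n₀ ≤ n →
      ∀ x ∈ histories F L, ∀ y ∈ histories F L, x 0 = x₀ → y 0 = x₀ → r < η x → r < η y →
        G x n '' T = G y n '' T ∨ Disjoint (G x n '' T) (G y n '' T)) :
    HasUniformInverseBranches F (historyBlock F L η lip r M) G r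
      fun n => (M * Real.exp (-n * Λ)).toNNReal where
  iterate_apply x hx n y hy := hinv x hx.1 n y (ball_subset_ball hx.2.1.le hy)
  apply_base x hx := hbase x hx.1
  lipschitzOnWith x hx n := by
    have hball : ball (x 0) r ⊆ ball (x 0) (η x) := ball_subset_ball hx.2.1.le
    refine .of_dist_le' fun y hy z hz => (hlip x hx.1 n y (hball hy) z (hball hz)).trans ?_
    gcongr
    exact hx.2.2
  eventually_eq_or_disjoint x₀ T hT hTr := by
    by_cases hx₀ : x₀ ∈ L
    · obtain ⟨n₀, hn₀⟩ := hdisj x₀ hx₀ T hT hTr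
      filter_upwards [eventually_ge_atTop n₀] with n hn x hx y hy hx0 hy0
      exact hn₀ n hn x hx.1 y hy.1 hx0 hy0 hx.2.1 hy.2.1
    · exact .of_forall fun n x hx _ _ hx0 => absurd (hx0 ▸ hx.1.1 0) hx₀

lemma tendsto_toNNReal_mul_exp_neg_mul (M : ℝ) (hΛ : 0 < Λ) :
    Tendsto (fun n : ℕ => (M * Real.exp (-n * Λ)).toNNReal) atTop (𝓝 0) := by
  have hexp : Tendsto (fun n : ℕ => Real.exp (-n * Λ)) atTop (𝓝 0) := by
    simp_rw [neg_mul]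
    exact Real.tendsto_exp_neg_atTop_nhds_zero.comp
      (tendsto_natCast_atTop_atTop.atTop_mul_const hΛ)
  simpa using tendsto_real_toNNReal (hexp.const_mul M)

end HistoryBlock

section WeakLimit

variable {X : Type*} [MetricSpace X] [CompleteSpace X] [MeasurableSpace X] [BorelSpace X]
  {F : X → X} {L C : Set X} {S : Set (ℕ → X)} {d : ℕ} {R : ℕ → Finset X} {σ : Measure X}
  [IsFiniteMeasure σ] {φ : ℕ → ℕ} {G : (ℕ → X) → ℕ → X → X} {r δ : ℝ} {κ : ℕ → ℝ≥0}

lemma limsup_returnDensity_le (hd0 : d ≠ 0)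
    (hR : ∀ n, 1 ≤ n → ∀ x, IsRepellingPeriodicPt F n x → x ∈ R n)
    (hφ : Tendsto φ atTop atTop)
    (hlim : ∀ f : BoundedContinuousFunction X ℝ,
      Tendsto (fun j => (∑ p ∈ R (φ j), f p) / (d : ℝ) ^ φ j) atTop (𝓝 (∫ x, f x ∂σ)))
    (hS : S ⊆ histories F L) (hG : HasUniformInverseBranches F S G r κ)
    (hκ : Tendsto κ atTop (𝓝 0)) (hδ : 0 < δ) {x : X} (hx : x ∈ C)
    (hCr : cthickening δ C ⊆ ball x r) :
    limsup (fun j => returnDensity F d S C (φ j) x) atTop ≤ σ (cthickening δ C) := by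
  have hcount : ∀ᶠ j in atTop, returnDensity F d S C (φ j) x ≤
      (R (φ j) ∩ cthickening δ C : Set X).encard / ((d ^ φ j : ℝ≥0) : ℝ≥0∞) := by
    filter_upwards [hφ.eventually (hG.eventually_encard_returnPoints_inter_le hS hκ hδ hx hCr),
      hφ.eventually_ge_atTop 1] with j hj hj1
    have hsub : {p ∈ cthickening δ C | IsRepellingPeriodicPt F (φ j) p} ⊆
        (R (φ j) ∩ cthickening δ C : Set X) := fun p hp => ⟨hR _ hj1 p hp.2, hp.1⟩
    rw [returnDensity, ENNReal.coe_pow, ENNReal.coe_natCast]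
    exact ENNReal.div_le_div_right
      (ENat.toENNReal_le.2 (hj.trans (encard_le_encard hsub))) _
  refine (limsup_le_limsup hcount).trans ?_
  exact limsup_encard_inter_div_le (fun j => pow_ne_zero _ (Nat.cast_ne_zero.2 hd0))
    (fun f => by simpa using hlim f) isClosed_cthickening

variable {ν : Measure X}

lemma lintegral_limsup_returnDensity_le (hd0 : d ≠ 0)
    (hR : ∀ n, 1 ≤ n → ∀ x, IsRepellingPeriodicPt F n x → x ∈ R n)
    (hφ : Tendsto φ atTop atTop)
    (hlim : ∀ f : BoundedContinuousFunction X ℝ,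
      Tendsto (fun j => (∑ p ∈ R (φ j), f p) / (d : ℝ) ^ φ j) atTop (𝓝 (∫ x, f x ∂σ)))
    (hS : S ⊆ histories F L) (hG : HasUniformInverseBranches F S G r κ)
    (hκ : Tendsto κ atTop (𝓝 0)) (hC : MeasurableSet C) (hδ : 0 < δ)
    (hCr : ∀ x ∈ C, cthickening δ C ⊆ ball x r) :
    ∫⁻ x, limsup (fun j => returnDensity F d S C (φ j) x) atTop ∂ν
      ≤ σ (cthickening δ C) * ν C := by
  rw [← lintegral_indicator_const hC]
  refine lintegral_mono fun x => ?_
  by_cases hx : x ∈ C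
  · rw [indicator_of_mem hx]
    exact limsup_returnDensity_le hd0 hR hφ hlim hS hG hκ hδ hx (hCr x hx)
  · simp [returnDensity_eq_zero hS hx]

variable [SecondCountableTopology X] {μ : Measure (ℕ → X)} [IsFiniteMeasure μ]

lemma measure_le_measure_cthickening (hF : Continuous F) (hd0 : d ≠ 0)
    (hR : ∀ n, 1 ≤ n → ∀ x, IsRepellingPeriodicPt F n x → x ∈ R n)
    (hφ : Tendsto φ atTop atTop)
    (hlim : ∀ f : BoundedContinuousFunction X ℝ,
      Tendsto (fun j => (∑ p ∈ R (φ j), f p) / (d : ℝ) ^ φ j) atTop (𝓝 (∫ x, f x ∂σ)))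
    (hjac : HasConstantJacobian F d ν) (hL : MapsTo F L L)
    (hd : ∀ y, (L ∩ F ⁻¹' {y}).encard ≤ d) (hμ : MeasurePreserving (histShift F) μ μ)
    (hmix : IsMixing (histShift F) μ) (hproj : ∀ j, μ.map (· j) = ν) (hSm : MeasurableSet S)
    (hS : S ⊆ histories F L) (hG : HasUniformInverseBranches F S G r κ)
    (hκ : Tendsto κ atTop (𝓝 0)) (hC : MeasurableSet C) (hδ : 0 < δ)
    (hCr : ∀ x ∈ C, cthickening δ C ⊆ ball x r) :
    μ (S ∩ (· 0) ⁻¹' C) ≤ σ (cthickening δ C) := by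
  have hνC : μ ((· 0) ⁻¹' C) = ν C := by
    rw [← hproj 0, Measure.map_apply (measurable_pi_apply 0) hC]
  have hνtop : ν C ≠ ∞ := hνC ▸ measure_ne_top μ _
  obtain hν0 | hν0 := eq_or_ne (ν C) 0
  · exact (measure_mono inter_subset_right).trans (by simp [hνC, hν0])
  refine (ENNReal.mul_le_mul_iff_left hν0 hνtop).1 ?_
  have hreturn : Tendsto (fun j => μ (S ∩ (· 0) ⁻¹' C ∩ (· (φ j)) ⁻¹' C)) atTop
      (𝓝 (μ (S ∩ (· 0) ⁻¹' C) * ν C)) := hνC ▸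
    (hmix.tendsto_measure_inter_coord_preimage hμ
      (hSm.inter (measurable_pi_apply 0 hC)) hC).comp hφ
  have hdensity (n : ℕ) :
      μ (S ∩ (· 0) ⁻¹' C ∩ (· n) ⁻¹' C) ≤ ∫⁻ x, returnDensity F d S C n x ∂ν :=
    hproj n ▸
      measure_le_lintegral_returnDensity hF ((hproj n).symm ▸ hjac) hd0 hL hd hS hSm hC
  calc μ (S ∩ (· 0) ⁻¹' C) * ν C
      = limsup (fun j => μ (S ∩ (· 0) ⁻¹' C ∩ (· (φ j)) ⁻¹' C)) atTop := hreturn.limsup_eq.symm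
    _ ≤ limsup (fun j => ∫⁻ x, returnDensity F d S C (φ j) x ∂ν) atTop :=
        limsup_le_limsup (.of_forall fun j => hdensity (φ j))
    _ ≤ ∫⁻ x, limsup (fun j => returnDensity F d S C (φ j) x) atTop ∂ν :=
        limsup_lintegral_le_lintegral_limsup (fun j => returnDensity_le_indicator hS hL hd (φ j))
          (by rwa [lintegral_indicator_one hC])
    _ ≤ σ (cthickening δ C) * ν C :=
        lintegral_limsup_returnDensity_le hd0 hR hφ hlim hS hG hκ hC hδ hCr

theorem weak_limit_dominates_nuN_on_small_closed_sets_general (hF : Continuous F) (hd0 : d ≠ 0)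
    (hR : ∀ n, 1 ≤ n → ∀ x, IsRepellingPeriodicPt F n x → x ∈ R n)
    (hφ : Tendsto φ atTop atTop)
    (hlim : ∀ f : BoundedContinuousFunction X ℝ,
      Tendsto (fun j => (∑ p ∈ R (φ j), f p) / (d : ℝ) ^ φ j) atTop (𝓝 (∫ x, f x ∂σ)))
    (hjac : HasConstantJacobian F d ν) (hL : MapsTo F L L)
    (hd : ∀ y, (L ∩ F ⁻¹' {y}).encard ≤ d) (hμ : MeasurePreserving (histShift F) μ μ)
    (hmix : IsMixing (histShift F) μ) (hproj : ∀ j, μ.map (· j) = ν) (hSm : MeasurableSet S)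
    (hS : S ⊆ histories F L) (hG : HasUniformInverseBranches F S G r κ)
    (hκ : Tendsto κ atTop (𝓝 0)) (hC : IsCompact C) {a : X} (hCa : C ⊆ ball a (r / 2)) :
    (μ.restrict S).map (· 0) C ≤ σ C := by
  rw [Measure.map_apply (measurable_pi_apply 0) hC.measurableSet,
    Measure.restrict_apply (measurable_pi_apply 0 hC.measurableSet), inter_comm]
  have hball (x : X) (hx : x ∈ C) : ball a (r / 2) ⊆ ball x r :=
    ball_half_subset a (mem_ball_comm.1 (hCa hx))
  obtain ⟨δ₀, hδ₀, hδ₀a⟩ := hC.exists_cthickening_subset_open isOpen_ball hCa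
  have hbound : ∀ δ ∈ Ioo 0 δ₀, μ (S ∩ (· 0) ⁻¹' C) ≤ σ (cthickening δ C) := fun δ hδ =>
    measure_le_measure_cthickening hF hd0 hR hφ hlim hjac hL hd hμ hmix hproj hSm hS hG hκ
      hC.measurableSet hδ.1 fun x hx =>
        ((cthickening_mono hδ.2.le C).trans hδ₀a).trans (hball x hx)
  have hshrink : Tendsto (fun δ => σ (cthickening δ C)) (𝓝[>] 0) (𝓝 (σ C)) :=
    (tendsto_measure_cthickening_of_isClosed ⟨1, one_pos, measure_ne_top σ _⟩
      hC.isClosed).mono_left nhdsWithin_le_nhds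
  exact ge_of_tendsto hshrink (mem_of_superset (Ioo_mem_nhdsGT hδ₀) hbound)

end WeakLimit

/-- with `L̂_N := {x̂ ∈ L̂ : η(x̂) > 1/N, l(x̂) ≤ N}` and
`ν_N := (π₀)_*(1_{L̂_N} ν̂)`, for every `â ∈ L̂_N` and every closed
`C ⊆ B(â₀, 1/(2N))`, any weak-* limit `σ̃` of `σ_n := d^{-n} ∑_{p ∈ R_n} δ_p`
satisfies `σ̃(C) ≥ ν_N(C)`. -/
theorem weak_limit_dominates_nuN_on_small_closed_sets
    {K : Type*} [MetricSpace K] [CompactSpace K] [MeasurableSpace K] [BorelSpace K]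
    (F : K → K) (hFcont : Continuous F)
    (d : ℕ) (hd : 2 ≤ d)
    (R : ℕ → Finset K)
    (hR : ∀ n, 1 ≤ n → ∀ x : K, x ∈ R n ↔ IsRepellingPeriodicPt F n x)
    (hRcard : Filter.limsup (fun n => ((R n).card : ℝ) / (d : ℝ) ^ n) atTop ≤ 1)
    (ν : Measure K) [IsProbabilityMeasure ν]
    (hinv : Measure.map F ν = ν)
    (hmix : ∀ A B : Set K, MeasurableSet A → MeasurableSet B →
      Tendsto (fun n => ν (A ∩ F^[n] ⁻¹' B)) atTop (𝓝 (ν A * ν B)))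
    (hjac : ∀ A : Set K, MeasurableSet A → Set.InjOn F A → MeasurableSet (F '' A) →
      (d : ℝ≥0∞) * ν A = ν (F '' A))
    (L : Set K) (hLmeas : MeasurableSet L) (hLfull : ν L = 1)
    (hLinv : F '' L = L)
    (hLdeg : ∀ y ∈ L, Set.ncard {x ∈ L | F x = y} = d)
    (νh : Measure (ℕ → K)) [IsProbabilityMeasure νh]
    (hhist : νh (histories F L) = 1)
    (hshiftinv : Measure.map (histShift F) νh = νh)
    (hmixh : ∀ A B : Set (ℕ → K), MeasurableSet A → MeasurableSet B →
      Tendsto (fun n => νh (A ∩ (histShift F)^[n] ⁻¹' B)) atTop (𝓝 (νh A * νh B)))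
    (hproj : ∀ j : ℕ, Measure.map (fun x : ℕ → K => x j) νh = ν)
    (η lip : (ℕ → K) → ℝ) (hηmeas : Measurable η) (hlipmeas : Measurable lip)
    (hηpos : ∀ xh ∈ histories F L, 0 < η xh)
    (hlip1 : ∀ xh ∈ histories F L, 1 ≤ lip xh)
    (Λ : ℝ) (hΛ : 0 < Λ)
    (G : (ℕ → K) → ℕ → K → K)
    -- (P1): `G xh n` is an inverse branch of `F^[n]` on `B(x₀, η(x̂))` sending `x₀` to
    -- `x₋ₙ`, with Lipschitz constant at most `l(x̂) e^{-nΛ}`.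
    (hGinv : ∀ xh ∈ histories F L, ∀ n : ℕ, ∀ y ∈ ball (xh 0) (η xh),
      F^[n] (G xh n y) = y)
    (hGpt : ∀ xh ∈ histories F L, ∀ n : ℕ, G xh n (xh 0) = xh n)
    (hGlip : ∀ xh ∈ histories F L, ∀ n : ℕ, ∀ y ∈ ball (xh 0) (η xh),
      ∀ z ∈ ball (xh 0) (η xh),
      dist (G xh n y) (G xh n z) ≤ lip xh * Real.exp (-(n : ℝ) * Λ) * dist y z)
    -- (P2): for closed `C ⊆ B(x₀, 1/N)`, the sets `G x̂ n '' C` over histories with zeroth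
    -- coordinate `x₀` and `η(x̂) > 1/N` are pairwise equal or disjoint for `n` large.
    (hP2 : ∀ x₀ ∈ L, ∀ N : ℕ, 1 ≤ N → ∀ C : Set K, IsClosed C →
      C ⊆ ball x₀ (1 / (N : ℝ)) →
      ∃ n₀ : ℕ, ∀ n, n₀ ≤ n → ∀ xh ∈ histories F L, ∀ yh ∈ histories F L,
        xh 0 = x₀ → yh 0 = x₀ → 1 / (N : ℝ) < η xh → 1 / (N : ℝ) < η yh →
        G xh n '' C = G yh n '' C ∨ Disjoint (G xh n '' C) (G yh n '' C))
    (N : ℕ) (hN : 1 ≤ N) :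
    ∀ ah ∈ {xh ∈ histories F L | 1 / (N : ℝ) < η xh ∧ lip xh ≤ (N : ℝ)},
      ∀ C : Set K, IsClosed C → C ⊆ ball (ah 0) (1 / (2 * (N : ℝ))) →
      ∀ σt : Measure K, IsFiniteMeasure σt →
        (∃ φ : ℕ → ℕ, StrictMono φ ∧ ∀ f : K → ℝ, Continuous f →
          Tendsto (fun j => (∑ p ∈ R (φ j), f p) / (d : ℝ) ^ (φ j)) atTop
            (𝓝 (∫ x, f x ∂σt))) →
        Measure.map (fun x : ℕ → K => x 0)
            (νh.restrict {xh ∈ histories F L | 1 / (N : ℝ) < η xh ∧ lip xh ≤ (N : ℝ)}) C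
          ≤ σt C := by
  intro ah _ C hC hCa σt _ ⟨φ, hφ, hlim⟩
  have hd0 : d ≠ 0 := by omega
  have hL : MapsTo F L L := mapsTo_iff_image_subset.2 hLinv.subset
  have hbranches : HasUniformInverseBranches F (historyBlock F L η lip (1 / N) N) G (1 / N)
      fun n => (N * Real.exp (-n * Λ)).toNNReal :=
    hasUniformInverseBranches_historyBlock hGinv hGpt hGlip fun x₀ hx₀ => hP2 x₀ hx₀ N hN
  have hCa' : C ⊆ ball (ah 0) (1 / N / 2) := hCa.trans_eq (by rw [div_div, mul_comm])
  exact weak_limit_dominates_nuN_on_small_closed_sets_general hFcont hd0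
    (fun n hn x => (hR n hn x).2) hφ.tendsto_atTop (fun f => hlim f f.continuous) hjac hL
    (encard_inter_preimage_singleton_le hL hd0 hLdeg)
    ⟨measurable_histShift hFcont.measurable, hshiftinv⟩ hmixh hproj
    (measurableSet_historyBlock hFcont.measurable hLmeas hηmeas hlipmeas) (fun _ hx => hx.1)
    hbranches (tendsto_toNNReal_mul_exp_neg_mul N hΛ) hC.isCompact hCa'
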